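/- There exists a pair of infinitely differentiable functions ρ₀ and ω₀ on [0,1], both supported in [1/4, 3/4], such that there is no global classical solution of the 1D model Boussinesq system on [0,∞) with initial data (ω₀, ρ₀). One may take: ρ₀ nonnegative, supported in [1/4,3/4], increasing on [1/4,1/2], decreasing on [1/2,3/4], with ρ₀(1/2)=2 and ρ₀(1/3)=1; and ω₀ nonnegative, supported in [1/4,1/2], with ω₀ ≡ M on [0.3, 0.45] for a sufficiently large constant M (e.g. M = 200). -/

import Mathlib

/-!
In the coordinate `p = -log x`, with `w(t,p) = ω(t,e^{-p})` and `r(t,p) = ρ(t,e^{-p})`, a particle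
at `p` moves with speed `V(t,p) = ∫_0^p w(t,q) dq`, the density `r` is transported, and `w` changes
at the rate `-e^p ∂_p r` along trajectories. Since `V` is Lipschitz in `p` and vanishes at `p = 0`,
trajectories starting in `p > 0` exist on all of `[0,2]` as long as the solution does, and they
never cross. The contradiction is that some trajectory has to reach `p = ∞` by time `2`.

* Substituting the equation for `w` and integrating by parts, the acceleration of a particle `P` is
  `∫_0^P (w² + e^q r) dq - e^P r(t,P) + r(t,0)` (`IsLogSol.accel`).
* The density increases with `p` up to the particle `H` starting at `x = 1/2`; there the vorticity
  is nonpositive, so `H` stays in `x ≥ 1/2`, i.e. `e^H ≤ 2` (`IsLogSol.exp_H_le`). Beyond `H` the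
  density decreases. Hence, if `B` lies between `H` and `A`, the acceleration of `A` is at least
  `(ρ₀(B) - ρ₀(A)) e^{B(t)} - 4` (`IsLogSol.le_accel`); with `B = A` it is at least `-4`.
* The plateau of `ω₀` gives all particles starting in `x ≤ 2/5` a large initial speed, so their
  speed stays positive on `[0,2]` (`IsLogSol.vel_ge`).
* By induction on `n`, all such particles with density at most `1 + 2^{-n}` are beyond
  `p = 10(n+1)` from time `2 - 2^{-n}` on (`IsLogSol.chain`): the density difference between two
  consecutive levels is `2^{-n-1}`, so the acceleration is of order `2^{-n-1} e^{10(n+1)}` on a time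
  interval of length `2^{-n-1}`. The particle starting at `x = 1/3`, where the density is `1`,
  satisfies the conclusion for every `n` at time `2`, which is absurd.
-/

open MeasureTheory Set

/-- `Ω(t,x) = ∫_x^1 ω(t,y)/y dy`. -/
noncomputable def OmegaF (ω : ℝ → ℝ → ℝ) (t x : ℝ) : ℝ := ∫ y in x..1, ω t y / y

/-- The velocity `u(t,x) = -x Ω(t,x)`. -/
noncomputable def uF (ω : ℝ → ℝ → ℝ) (t x : ℝ) : ℝ := -x * OmegaF ω t x

/-- A classical solution of the 1D model Boussinesq system on a time interval `I`:
the pair `(ω,ρ)` is continuously differentiable in `(t,x)` on `I × [0,1]` and the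
equations `∂_t ρ + u ∂_x ρ = 0`, `∂_t ω + u ∂_x ω = ∂_x ρ` hold pointwise. -/
def IsClassicalSolution (ω ρ : ℝ → ℝ → ℝ) (I : Set ℝ) : Prop :=
  ContDiffOn ℝ 1 (fun p : ℝ × ℝ => ω p.1 p.2) (I ×ˢ Icc (0:ℝ) 1) ∧
  ContDiffOn ℝ 1 (fun p : ℝ × ℝ => ρ p.1 p.2) (I ×ˢ Icc (0:ℝ) 1) ∧
  ∀ t ∈ I, ∀ x ∈ Icc (0:ℝ) 1,
    (deriv (fun s => ρ s x) t + uF ω t x * deriv (fun y => ρ t y) x = 0) ∧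
    (deriv (fun s => ω s x) t + uF ω t x * deriv (fun y => ω t y) x
        = deriv (fun y => ρ t y) x)

/-- `sup_{x ∈ [0,1]} |f x|`. -/
noncomputable def supAbs (f : ℝ → ℝ) : ℝ := sSup ((fun x => |f x|) '' Icc (0:ℝ) 1)

/-! ### The system in the coordinate `p = -log x` -/

/-- The velocity in the coordinate `p = -log x`: a particle at `p` moves with speed
`V(t,p) = ∫_0^p w(t,q) dq = Ω(t, e^{-p})`, where `w(t,q) = ω(t, e^{-q})`. -/
noncomputable def logVel (w : ℝ → ℝ → ℝ) (t p : ℝ) : ℝ := ∫ q in (0:ℝ)..p, w t q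

/-- A solution on the time interval `[0,2]` in the coordinate `p = -log x`, with
`w(t,p) = ω(t,e^{-p})` and `r(t,p) = ρ(t,e^{-p})`. The partial derivatives are recorded as
separate functions `wt, wp, rt, rp`. The functions `w, r, wt` are continuous on the whole plane
(values outside `[0,2] × [0,∞)` come from clamping the arguments), while differentiability and the
equations are only required in the interior of that region. -/
structure IsLogSol (w r wt wp rt rp : ℝ → ℝ → ℝ) (C : ℝ) : Prop where
  cw : Continuous fun z : ℝ × ℝ => w z.1 z.2
  cr : Continuous fun z : ℝ × ℝ => r z.1 z.2
  cwt : Continuous fun z : ℝ × ℝ => wt z.1 z.2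
  bound : ∀ t p, |w t p| ≤ C
  dw : ∀ t ∈ Ioo (0:ℝ) 2, ∀ p, 0 < p → HasFDerivAt (fun z : ℝ × ℝ => w z.1 z.2)
    (wt t p • ContinuousLinearMap.fst ℝ ℝ ℝ + wp t p • ContinuousLinearMap.snd ℝ ℝ ℝ) (t, p)
  dr : ∀ t ∈ Ioo (0:ℝ) 2, ∀ p, 0 < p → HasFDerivAt (fun z : ℝ × ℝ => r z.1 z.2)
    (rt t p • ContinuousLinearMap.fst ℝ ℝ ℝ + rp t p • ContinuousLinearMap.snd ℝ ℝ ℝ) (t, p)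
  eqr : ∀ t ∈ Ioo (0:ℝ) 2, ∀ p, 0 < p → rt t p + logVel w t p * rp t p = 0
  eqw : ∀ t ∈ Ioo (0:ℝ) 2, ∀ p, 0 < p →
    wt t p + logVel w t p * wp t p = - Real.exp p * rp t p

/-- A particle trajectory in the coordinate `p = -log x`, staying in `p > 0`, i.e. in `x < 1`. -/
structure IsTraj (w : ℝ → ℝ → ℝ) (P : ℝ → ℝ) : Prop where
  cont : ContinuousOn P (Icc 0 2)
  pos : ∀ t ∈ Icc (0:ℝ) 2, 0 < P t
  der : ∀ t ∈ Ioo (0:ℝ) 2, HasDerivAt P (logVel w t (P t)) t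

/-! ### Trajectories -/

/-- A two-sided Gronwall estimate: if `|f'| ≤ C |f|` on `[0,2]`, the values of `f²` at any two times
are comparable. -/
lemma sq_le_of_deriv_bound {f f' : ℝ → ℝ} {C : ℝ} (hC : 0 ≤ C) (hf : ContinuousOn f (Icc 0 2))
    (hd : ∀ t ∈ Ioo (0:ℝ) 2, HasDerivAt f (f' t) t)
    (hb : ∀ t ∈ Ioo (0:ℝ) 2, |f' t| ≤ C * |f t|) {s t : ℝ} (hs : s ∈ Icc (0:ℝ) 2)
    (ht : t ∈ Icc (0:ℝ) 2) : f t ^ 2 ≤ f s ^ 2 * Real.exp (4 * C) := by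
  have key : ∀ u ∈ Ioo (0:ℝ) 2, |f u * f' u| ≤ C * f u ^ 2 := by
    intro u hu
    rw [abs_mul, ← sq_abs (f u)]
    nlinarith [hb u hu, abs_nonneg (f u)]
  have mono : MonotoneOn (fun u => f u ^ 2 * Real.exp (2 * C * u)) (Icc 0 2) := by
    refine monotoneOn_of_hasDerivWithinAt_nonneg (convex_Icc 0 2)
      (f' := fun u => (2 * f u * f' u) * Real.exp (2 * C * u)
        + f u ^ 2 * (Real.exp (2 * C * u) * (2 * C))) (by fun_prop) ?_ ?_
    · intro u hu
      rw [interior_Icc] at hu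
      have h1 := (hd u hu).pow 2
      have h2 := ((hasDerivAt_id u).const_mul (2 * C)).exp
      exact ((h1.mul h2).congr_deriv (by simp)).hasDerivWithinAt
    · intro u hu
      rw [interior_Icc] at hu
      have := neg_le_of_abs_le (key u hu)
      have h2 := Real.exp_pos (2 * C * u)
      have : 0 ≤ (2 * f u * f' u + f u ^ 2 * (2 * C)) * Real.exp (2 * C * u) :=
        mul_nonneg (by nlinarith) h2.le
      linarith
  have anti : AntitoneOn (fun u => f u ^ 2 * Real.exp (-(2 * C) * u)) (Icc 0 2) := by
    refine antitoneOn_of_hasDerivWithinAt_nonpos (convex_Icc 0 2)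
      (f' := fun u => (2 * f u * f' u) * Real.exp (-(2 * C) * u)
        + f u ^ 2 * (Real.exp (-(2 * C) * u) * (-(2 * C)))) (by fun_prop) ?_ ?_
    · intro u hu
      rw [interior_Icc] at hu
      have h1 := (hd u hu).pow 2
      have h2 := ((hasDerivAt_id u).const_mul (-(2 * C))).exp
      exact ((h1.mul h2).congr_deriv (by simp)).hasDerivWithinAt
    · intro u hu
      rw [interior_Icc] at hu
      have := le_of_abs_le (key u hu)
      have h2 := Real.exp_pos (-(2 * C) * u)
      have : 0 ≤ (-(2 * f u * f' u) + f u ^ 2 * (2 * C)) * Real.exp (-(2 * C) * u) :=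
        mul_nonneg (by nlinarith) h2.le
      linarith
  rcases le_total s t with h | h
  · have h1 := anti hs ht h
    simp only at h1
    calc f t ^ 2 = f t ^ 2 * Real.exp (-(2 * C) * t) * Real.exp (2 * C * t) := by
          rw [mul_assoc, ← Real.exp_add]; simp
      _ ≤ f s ^ 2 * Real.exp (-(2 * C) * s) * Real.exp (2 * C * t) := by gcongr
      _ = f s ^ 2 * Real.exp (2 * C * (t - s)) := by
          rw [mul_assoc, ← Real.exp_add]; congr 2; ring
      _ ≤ f s ^ 2 * Real.exp (4 * C) := by
          refine mul_le_mul_of_nonneg_left (Real.exp_le_exp.2 ?_) (sq_nonneg _)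
          nlinarith [hs.1, ht.2]
  · have h1 := mono ht hs h
    simp only at h1
    calc f t ^ 2 = f t ^ 2 * Real.exp (2 * C * t) * Real.exp (-(2 * C) * t) := by
          rw [mul_assoc, ← Real.exp_add]; simp
      _ ≤ f s ^ 2 * Real.exp (2 * C * s) * Real.exp (-(2 * C) * t) := by gcongr
      _ = f s ^ 2 * Real.exp (2 * C * (s - t)) := by
          rw [mul_assoc, ← Real.exp_add]; congr 2; ring
      _ ≤ f s ^ 2 * Real.exp (4 * C) := by
          refine mul_le_mul_of_nonneg_left (Real.exp_le_exp.2 ?_) (sq_nonneg _)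
          nlinarith [ht.1, hs.2]

lemma pos_of_deriv_bound {f f' : ℝ → ℝ} {C : ℝ} (hC : 0 ≤ C) (hf : ContinuousOn f (Icc 0 2))
    (hd : ∀ t ∈ Ioo (0:ℝ) 2, HasDerivAt f (f' t) t)
    (hb : ∀ t ∈ Ioo (0:ℝ) 2, |f' t| ≤ C * |f t|) {s t : ℝ} (hs : s ∈ Icc (0:ℝ) 2)
    (ht : t ∈ Icc (0:ℝ) 2) (h0 : 0 < f s) : 0 < f t := by
  by_contra hcon
  have hsub : uIcc s t ⊆ Icc (0:ℝ) 2 := (convex_Icc (0:ℝ) 2).ordConnected.uIcc_subset hs ht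
  have := intermediate_value_uIcc (hf.mono hsub)
  obtain ⟨u, hu, hu0⟩ := this (show (0:ℝ) ∈ uIcc (f s) (f t) from
    mem_uIcc.2 (Or.inr ⟨not_lt.1 hcon, h0.le⟩))
  have h2 := sq_le_of_deriv_bound hC hf hd hb (hsub hu) hs
  rw [hu0] at h2
  nlinarith

section LogSol

variable {w r wt wp rt rp : ℝ → ℝ → ℝ} {C : ℝ}

lemma IsLogSol.C_nonneg (S : IsLogSol w r wt wp rt rp C) : 0 ≤ C :=
  (abs_nonneg _).trans (S.bound 0 0)

lemma IsLogSol.cw_slice (S : IsLogSol w r wt wp rt rp C) (t : ℝ) : Continuous (w t) :=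
  S.cw.comp (Continuous.prodMk_right t)

lemma IsLogSol.cr_slice (S : IsLogSol w r wt wp rt rp C) (t : ℝ) : Continuous (r t) :=
  S.cr.comp (Continuous.prodMk_right t)

lemma IsLogSol.vel_lip (S : IsLogSol w r wt wp rt rp C) (t p q : ℝ) :
    |logVel w t p - logVel w t q| ≤ C * |p - q| := by
  unfold logVel
  rw [intervalIntegral.integral_interval_sub_left ((S.cw_slice t).intervalIntegrable _ _)
    ((S.cw_slice t).intervalIntegrable _ _)]
  exact intervalIntegral.norm_integral_le_of_norm_le_const (f := w t) (fun x _ => S.bound t x)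

lemma logVel_zero (w : ℝ → ℝ → ℝ) (t : ℝ) : logVel w t 0 = 0 := by simp [logVel]

lemma IsLogSol.vel_bound (S : IsLogSol w r wt wp rt rp C) (t p : ℝ) :
    |logVel w t p| ≤ C * |p| := by
  simpa [logVel_zero] using S.vel_lip t p 0

lemma IsLogSol.vel_cont (S : IsLogSol w r wt wp rt rp C) :
    Continuous fun z : ℝ × ℝ => logVel w z.1 z.2 :=
  intervalIntegral.continuous_parametric_primitive_of_continuous (f := w) S.cw

/-- Through every point of `[0,2] × (0,∞)` passes a trajectory defined on all of `[0,2]`. The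
Picard–Lindelöf theorem is applied to the field truncated at a height `R` which, by the Gronwall
estimate, the trajectory never reaches. -/
lemma IsLogSol.exists_traj (S : IsLogSol w r wt wp rt rp C) {t₀ p₁ : ℝ} (ht₀ : t₀ ∈ Icc (0:ℝ) 2)
    (hp : 0 < p₁) : ∃ P, IsTraj w P ∧ P t₀ = p₁ := by
  have hC := S.C_nonneg
  set R : ℝ := p₁ * Real.exp (2 * C) with hR
  have hR0 : 0 < R := by positivity
  set cl : ℝ → ℝ := fun p => max 0 (min p R) with hcl
  have cl_lip : ∀ p q, |cl p - cl q| ≤ |p - q| := by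
    intro p q
    have h1 := abs_max_sub_max_le_max 0 (min p R) 0 (min q R)
    have h2 := abs_min_sub_min_le_max p R q R
    rw [sub_self, abs_zero, max_eq_right (abs_nonneg (min p R - min q R))] at h1
    rw [sub_self, abs_zero, max_eq_left (abs_nonneg (p - q))] at h2
    exact h1.trans h2
  have cl_abs : ∀ p, |cl p| ≤ |p| := fun p => by
    have := cl_lip p 0
    simpa [hcl, hR0.le] using this
  have cl_le : ∀ p, |cl p| ≤ R := fun p => by
    rw [abs_of_nonneg (le_max_left _ _)]
    exact max_le hR0.le (min_le_right _ _)
  have hPL : IsPicardLindelof (fun t p => logVel w t (cl p)) (⟨t₀, ht₀⟩ : Icc (0:ℝ) 2) p₁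
      (⟨C * R * 2, by positivity⟩) 0 (⟨C * R, by positivity⟩) ⟨C, hC⟩ := by
    refine ⟨fun t _ => LipschitzOnWith.of_dist_le_mul fun p _ q _ => ?_, fun p _ => ?_,
      fun t _ p _ => ?_, ?_⟩
    · simp only [Real.dist_eq]
      exact (S.vel_lip t _ _).trans (mul_le_mul_of_nonneg_left (cl_lip p q) hC)
    · exact (S.vel_cont.comp (Continuous.prodMk_left (cl p))).continuousOn
    · simp only [Real.norm_eq_abs]
      exact (S.vel_bound t _).trans (mul_le_mul_of_nonneg_left (cl_le p) hC)
    · simp only [NNReal.coe_zero, sub_zero]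
      refine mul_le_mul_of_nonneg_left ?_ (mul_nonneg hC hR0.le)
      exact max_le (by linarith [ht₀.1]) (ht₀.2)
  obtain ⟨P, hP0, hP⟩ := hPL.exists_eq_forall_mem_Icc_hasDerivWithinAt₀
  have hP0 : P t₀ = p₁ := hP0
  have hc : ContinuousOn P (Icc 0 2) := fun t ht => (hP t ht).continuousWithinAt
  have hd : ∀ t ∈ Ioo (0:ℝ) 2, HasDerivAt P (logVel w t (cl (P t))) t := fun t ht =>
    (hP t (Ioo_subset_Icc_self ht)).hasDerivAt (Icc_mem_nhds ht.1 ht.2)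
  have hb : ∀ t ∈ Ioo (0:ℝ) 2, |logVel w t (cl (P t))| ≤ C * |P t| := fun t _ =>
    (S.vel_bound t _).trans (mul_le_mul_of_nonneg_left (cl_abs _) hC)
  have hpos : ∀ t ∈ Icc (0:ℝ) 2, 0 < P t := fun t ht =>
    pos_of_deriv_bound hC hc hd hb ht₀ ht (by rw [hP0]; exact hp)
  refine ⟨P, ⟨hc, hpos, fun t ht => ?_⟩, hP0⟩
  have hle : P t ≤ R := by
    have := sq_le_of_deriv_bound hC hc hd hb ht₀ (Ioo_subset_Icc_self ht)
    rw [hP0] at this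
    refine le_of_sq_le_sq ?_ hR0.le
    rwa [hR, mul_pow, ← Real.exp_nat_mul,
      show ((2:ℕ):ℝ) * (2 * C) = 4 * C by push_cast; ring]
  have h := hd t ht
  rwa [show cl (P t) = P t by
    simp [hcl, hle, (hpos t (Ioo_subset_Icc_self ht)).le]] at h

/-- Trajectories never cross. -/
lemma IsLogSol.traj_lt (S : IsLogSol w r wt wp rt rp C) {P Q : ℝ → ℝ} (hP : IsTraj w P)
    (hQ : IsTraj w Q) {s t : ℝ} (hs : s ∈ Icc (0:ℝ) 2) (ht : t ∈ Icc (0:ℝ) 2) (h : P s < Q s) :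
    P t < Q t := by
  have := pos_of_deriv_bound (f := fun t => Q t - P t) S.C_nonneg (hQ.cont.sub hP.cont)
    (fun u hu => (hQ.der u hu).sub (hP.der u hu)) (fun u _ => S.vel_lip u _ _) hs ht (by simpa)
  simpa using this

lemma IsLogSol.traj_le (S : IsLogSol w r wt wp rt rp C) {P Q : ℝ → ℝ} (hP : IsTraj w P)
    (hQ : IsTraj w Q) {s t : ℝ} (hs : s ∈ Icc (0:ℝ) 2) (ht : t ∈ Icc (0:ℝ) 2) (h : P s ≤ Q s) :
    P t ≤ Q t := by
  by_contra hcon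
  exact absurd (S.traj_lt hQ hP ht hs (not_le.1 hcon)) (not_lt.2 h)

lemma hasDerivAt_along {g : ℝ → ℝ → ℝ} {a b t v : ℝ} {P : ℝ → ℝ}
    (hg : HasFDerivAt (fun z : ℝ × ℝ => g z.1 z.2)
      (a • ContinuousLinearMap.fst ℝ ℝ ℝ + b • ContinuousLinearMap.snd ℝ ℝ ℝ) (t, P t))
    (hP : HasDerivAt P v t) : HasDerivAt (fun s => g s (P s)) (a + v * b) t := by
  have h := (hasDerivAt_id t).prodMk hP
  have h2 := HasFDerivAt.comp_hasDerivAt (f := fun s => (id s, P s)) t hg h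
  exact h2.congr_deriv (by simp [mul_comm])

lemma contOn_along {g : ℝ → ℝ → ℝ} {P : ℝ → ℝ} (hg : Continuous fun z : ℝ × ℝ => g z.1 z.2)
    (hP : ContinuousOn P (Icc 0 2)) : ContinuousOn (fun s => g s (P s)) (Icc 0 2) :=
  hg.comp_continuousOn (continuousOn_id.prodMk hP)

/-- The density is transported. -/
lemma IsLogSol.r_along (S : IsLogSol w r wt wp rt rp C) {P : ℝ → ℝ} (hP : IsTraj w P)
    {t : ℝ} (ht : t ∈ Icc (0:ℝ) 2) : r t (P t) = r 0 (P 0) := by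
  have hd : ∀ u ∈ Ioo (0:ℝ) 2, HasDerivAt (fun s => r s (P s)) 0 u := fun u hu => by
    have hp := hP.pos u (Ioo_subset_Icc_self hu)
    have := hasDerivAt_along (S.dr u hu _ hp) (hP.der u hu)
    rwa [S.eqr u hu _ hp] at this
  have hc := contOn_along S.cr hP.cont
  have m := monotoneOn_of_hasDerivWithinAt_nonneg (f' := fun _ => 0) (convex_Icc 0 2) hc
    (fun u hu => by rw [interior_Icc] at hu; exact (hd u hu).hasDerivWithinAt) (by simp)
  have a := antitoneOn_of_hasDerivWithinAt_nonpos (f' := fun _ => 0) (convex_Icc 0 2) hc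
    (fun u hu => by rw [interior_Icc] at hu; exact (hd u hu).hasDerivWithinAt) (by simp)
  have h0 : (0:ℝ) ∈ Icc (0:ℝ) 2 := by simp
  exact le_antisymm (a h0 ht ht.1) (m h0 ht ht.1)

/-! ### The acceleration of a particle -/

/-- Leibniz' rule for the velocity at a fixed position. -/
lemma IsLogSol.vel_hasDerivAt_time (S : IsLogSol w r wt wp rt rp C) {t p : ℝ}
    (ht : t ∈ Ioo (0:ℝ) 2) (hp : 0 < p) :
    HasDerivAt (fun s => logVel w s p) (∫ q in (0:ℝ)..p, wt t q) t := by
  obtain ⟨K, hK⟩ := ((isCompact_Icc (a := (0:ℝ)) (b := 2)).prod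
    (isCompact_Icc (a := (0:ℝ)) (b := p))).exists_bound_of_continuousOn S.cwt.continuousOn
  refine (intervalIntegral.hasDerivAt_integral_of_dominated_loc_of_deriv_le (μ := volume)
    (F := w) (F' := wt) (bound := fun _ => K) (s := Ioo 0 2) (Ioo_mem_nhds ht.1 ht.2)
    (Filter.Eventually.of_forall fun s => (S.cw_slice s).aestronglyMeasurable)
    ((S.cw_slice t).intervalIntegrable _ _)
    (S.cwt.comp (Continuous.prodMk_right t)).aestronglyMeasurable
    (Filter.Eventually.of_forall fun q hq s hs => ?_) intervalIntegrable_const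
    (Filter.Eventually.of_forall fun q hq s hs => ?_)).2
  · rw [uIoc_of_le hp.le] at hq
    exact hK (s, q) ⟨Ioo_subset_Icc_self hs, Ioc_subset_Icc_self hq⟩
  · rw [uIoc_of_le hp.le] at hq
    have := hasDerivAt_along (P := fun _ => q) (S.dw s hs q hq.1) (hasDerivAt_const s q)
    simpa using this

lemma IsLogSol.vel_hasDerivAt_pos (S : IsLogSol w r wt wp rt rp C) (t p : ℝ) :
    HasDerivAt (logVel w t) (w t p) p :=
  (S.cw_slice t).integral_hasStrictDerivAt 0 p |>.hasDerivAt

lemma IsLogSol.vel_hasDerivAt_along (S : IsLogSol w r wt wp rt rp C) {P : ℝ → ℝ}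
    (hP : IsTraj w P) {t : ℝ} (ht : t ∈ Ioo (0:ℝ) 2) :
    HasDerivAt (fun s => logVel w s (P s))
      ((∫ q in (0:ℝ)..P t, wt t q) + logVel w t (P t) * w t (P t)) t := by
  have hPt := hP.pos t (Ioo_subset_Icc_self ht)
  have hnhds : ∀ᶠ v : ℝ × ℝ in nhds (t, P t), v.1 ∈ Ioo (0:ℝ) 2 ∧ 0 < v.2 :=
    (continuousAt_fst.eventually (Ioo_mem_nhds ht.1 ht.2)).and
      (continuousAt_snd.eventually (Ioi_mem_nhds hPt))
  have hc : Continuous (ContinuousLinearMap.toSpanSingletonCLE (𝕜 := ℝ) (E := ℝ)) :=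
    ContinuousLinearEquiv.continuous _
  have h := hasStrictFDerivAt_uncurry_coprod (𝕜 := ℝ) (u := (t, P t)) (f := logVel w)
    (f₁ := fun s p => ContinuousLinearMap.toSpanSingleton ℝ (∫ q in (0:ℝ)..p, wt s q))
    (f₂ := fun s p => ContinuousLinearMap.toSpanSingleton ℝ (w s p))
    (hnhds.mono fun v hv => (S.vel_hasDerivAt_time hv.1 hv.2).hasFDerivAt)
    (Filter.Eventually.of_forall fun v => (S.vel_hasDerivAt_pos v.1 v.2).hasFDerivAt)
    (hc.comp (intervalIntegral.continuous_parametric_primitive_of_continuous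
      (f := wt) S.cwt)).continuousAt
    (hc.comp S.cw).continuousAt
  refine hasDerivAt_along (g := logVel w) (h.hasFDerivAt.congr_fderiv ?_) (hP.der t ht)
  ext <;> simp [Function.HasUncurry.uncurry]

/-- The acceleration of a particle. Substituting the vorticity equation in `∫ wt` and
integrating by parts leaves a square and a density term. -/
lemma IsLogSol.accel (S : IsLogSol w r wt wp rt rp C) {P : ℝ → ℝ}
    (hP : IsTraj w P) {t : ℝ} (ht : t ∈ Ioo (0:ℝ) 2) :
    HasDerivAt (fun s => logVel w s (P s))
      ((∫ q in (0:ℝ)..P t, (w t q ^ 2 + Real.exp q * r t q))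
        - Real.exp (P t) * r t (P t) + r t 0) t := by
  refine (S.vel_hasDerivAt_along hP ht).congr_deriv ?_
  have hPt := hP.pos t (Ioo_subset_Icc_self ht)
  have cw := S.cw_slice t
  have cr := S.cr_slice t
  have cwt : Continuous (wt t) := S.cwt.comp (Continuous.prodMk_right t)
  have cV : Continuous (logVel w t) := S.vel_cont.comp (Continuous.prodMk_right t)
  have hFTC := intervalIntegral.integral_eq_sub_of_hasDerivAt_of_le hPt.le
    (f := fun q => logVel w t q * w t q + Real.exp q * r t q)
    (f' := fun q => (w t q ^ 2 + Real.exp q * r t q) - wt t q)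
    (by fun_prop) (fun q hq => ?_) (Continuous.intervalIntegrable (by fun_prop) _ _)
  · rw [intervalIntegral.integral_sub (Continuous.intervalIntegrable (by fun_prop) _ _)
      (cwt.intervalIntegrable _ _)] at hFTC
    simp only [logVel_zero, Real.exp_zero] at hFTC
    linarith
  · have dw : HasDerivAt (w t) (wp t q) q := by
      have := HasFDerivAt.comp_hasDerivAt (f := fun s => (t, s)) q (S.dw t ht q hq.1)
        ((hasDerivAt_const q t).prodMk (hasDerivAt_id q))
      exact this.congr_deriv (by simp)
    have dr : HasDerivAt (r t) (rp t q) q := by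
      have := HasFDerivAt.comp_hasDerivAt (f := fun s => (t, s)) q (S.dr t ht q hq.1)
        ((hasDerivAt_const q t).prodMk (hasDerivAt_id q))
      exact this.congr_deriv (by simp)
    refine (((S.vel_hasDerivAt_pos t q).mul dw).add ((Real.hasDerivAt_exp q).mul dr)).congr_deriv ?_
    linarith [S.eqw t ht q hq.1]

end LogSol

/-! ### The chain of accelerating particles -/

/-- The properties of the initial data used in the blow-up argument, in the coordinate
`p = -log x`. -/
structure IsBlowupData (w₀ r₀ : ℝ → ℝ) : Prop where
  mono : MonotoneOn r₀ (Icc 0 (Real.log 2))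
  anti : AntitoneOn r₀ (Ici (Real.log 2))
  nonneg : ∀ p, 0 ≤ r₀ p
  le_two : ∀ p, r₀ p ≤ 2
  eq_two : r₀ (Real.log (5 / 2)) = 2
  eq_one : r₀ (Real.log 3) = 1
  w_zero : ∀ p ∈ Icc 0 (Real.log 2), w₀ p = 0
  w_nonneg : ∀ p, 0 ≤ w₀ p
  w_large : ∀ p ∈ Icc (Real.log (20 / 9)) (Real.log (5 / 2)), w₀ p = 9000

lemma image_le_of_deriv_le {f g f' g' : ℝ → ℝ} {a b : ℝ} (hf : ContinuousOn f (Icc a b))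
    (hg : ContinuousOn g (Icc a b)) (hf' : ∀ t ∈ Ioo a b, HasDerivAt f (f' t) t)
    (hg' : ∀ t ∈ Ioo a b, HasDerivAt g (g' t) t) (h : ∀ t ∈ Ioo a b, f' t ≤ g' t)
    (ha : f a ≤ g a) {t : ℝ} (ht : t ∈ Icc a b) : f t ≤ g t := by
  have m : MonotoneOn (fun s => g s - f s) (Icc a b) := by
    refine monotoneOn_of_hasDerivWithinAt_nonneg (f' := fun s => g' s - f' s) (convex_Icc a b)
      (hg.sub hf) (fun u hu => ?_) (fun u hu => ?_)
    · rw [interior_Icc] at hu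
      exact ((hg' u hu).sub (hf' u hu)).hasDerivWithinAt
    · rw [interior_Icc] at hu
      exact sub_nonneg.2 (h u hu)
  have := m (left_mem_Icc.2 (ht.1.trans ht.2)) ht ht.1
  simp only at this
  linarith

section Blowup

variable {w r wt wp rt rp : ℝ → ℝ → ℝ} {C : ℝ}

lemma IsTraj.cont_vel (S : IsLogSol w r wt wp rt rp C) {P : ℝ → ℝ} (hP : IsTraj w P) :
    ContinuousOn (fun s => logVel w s (P s)) (Icc 0 2) :=
  contOn_along (g := logVel w) S.vel_cont hP.cont

lemma IsLogSol.r_nonneg (S : IsLogSol w r wt wp rt rp C) (D : IsBlowupData (w 0) (r 0)) {t : ℝ}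
    (ht : t ∈ Icc (0:ℝ) 2) {p : ℝ} (hp : 0 ≤ p) : 0 ≤ r t p := by
  have h : ∀ q ∈ Ioi (0:ℝ), 0 ≤ r t q := fun q hq => by
    obtain ⟨P, hP, rfl⟩ := S.exists_traj ht hq
    rw [S.r_along hP ht]
    exact D.nonneg _
  have hcl : IsClosed {q | 0 ≤ r t q} := isClosed_le continuous_const (S.cr_slice t)
  have := closure_minimal (s := Ioi (0:ℝ)) (t := {q | 0 ≤ r t q}) h hcl
  rw [closure_Ioi] at this
  exact this hp

/-- To the right of the particle starting at `x = 1/2`, i.e. for smaller `p`, the density is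
monotone. -/
lemma IsLogSol.mono_right (S : IsLogSol w r wt wp rt rp C) (D : IsBlowupData (w 0) (r 0))
    {H : ℝ → ℝ} (hH : IsTraj w H) (hH0 : H 0 = Real.log 2) {t : ℝ} (ht : t ∈ Icc (0:ℝ) 2) :
    MonotoneOn (r t) (Ioc 0 (H t)) := by
  intro p hp q hq hpq
  obtain ⟨P, hP, rfl⟩ := S.exists_traj ht hp.1
  obtain ⟨Q, hQ, rfl⟩ := S.exists_traj ht hq.1
  have h0 : (0:ℝ) ∈ Icc (0:ℝ) 2 := by simp
  rw [S.r_along hP ht, S.r_along hQ ht]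
  refine D.mono ⟨(hP.pos 0 h0).le, ?_⟩ ⟨(hQ.pos 0 h0).le, ?_⟩ (S.traj_le hP hQ ht h0 hpq)
  · rw [← hH0]; exact S.traj_le hP hH ht h0 hp.2
  · rw [← hH0]; exact S.traj_le hQ hH ht h0 hq.2

/-- The vorticity is generated by the density gradient, hence is nonpositive to the right of
the particle starting at `x = 1/2`, where it vanishes initially. -/
lemma IsLogSol.w_nonpos_right (S : IsLogSol w r wt wp rt rp C) (D : IsBlowupData (w 0) (r 0))
    {H : ℝ → ℝ} (hH : IsTraj w H) (hH0 : H 0 = Real.log 2) {t : ℝ} (ht : t ∈ Icc (0:ℝ) 2)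
    {p : ℝ} (hp : 0 < p) (hpH : p < H t) : w t p ≤ 0 := by
  have h0 : (0:ℝ) ∈ Icc (0:ℝ) 2 := by simp
  obtain ⟨P, hP, rfl⟩ := S.exists_traj ht hp
  refine image_le_of_deriv_le (f := fun s => w s (P s)) (g := fun _ => 0) (g' := fun _ => 0)
    (contOn_along S.cw hP.cont) continuousOn_const
    (fun s hs => hasDerivAt_along (S.dw s hs _ (hP.pos s (Ioo_subset_Icc_self hs))) (hP.der s hs))
    (fun s _ => hasDerivAt_const s 0) (fun s hs => ?_) ?_ ht
  · have hs' := Ioo_subset_Icc_self hs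
    have hPs := hP.pos s hs'
    have hPH : P s < H s := S.traj_lt hP hH ht hs' hpH
    rw [S.eqw s hs _ hPs]
    have hd : HasDerivAt (r s) (rp s (P s)) (P s) := by
      have := HasFDerivAt.comp_hasDerivAt (f := fun q => (s, q)) (P s) (S.dr s hs _ hPs)
        ((hasDerivAt_const (P s) s).prodMk (hasDerivAt_id (P s)))
      exact this.congr_deriv (by simp)
    have hn : 0 ≤ rp s (P s) := by
      have hmem : Ioc 0 (H s) ∈ nhds (P s) := Ioc_mem_nhds hPs hPH
      have := (S.mono_right D hH hH0 hs').derivWithin_nonneg (x := P s)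
      rwa [derivWithin_of_mem_nhds hmem, hd.deriv] at this
    have := mul_nonneg (Real.exp_pos (P s)).le hn
    linarith
  · refine (D.w_zero _ ⟨(hP.pos 0 h0).le, ?_⟩).le
    rw [← hH0]
    exact (S.traj_lt hP hH ht h0 hpH).le

/-- The particle starting at `x = 1/2` stays in `x ≥ 1/2`. -/
lemma IsLogSol.exp_H_le (S : IsLogSol w r wt wp rt rp C) (D : IsBlowupData (w 0) (r 0))
    {H : ℝ → ℝ} (hH : IsTraj w H) (hH0 : H 0 = Real.log 2) {t : ℝ} (ht : t ∈ Icc (0:ℝ) 2) :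
    Real.exp (H t) ≤ 2 := by
  have : H t ≤ Real.log 2 := by
    refine image_le_of_deriv_le (g := fun _ => Real.log 2) (g' := fun _ => 0) hH.cont
      continuousOn_const hH.der (fun s _ => hasDerivAt_const s _) (fun s hs => ?_) hH0.le ht
    have hs' := Ioo_subset_Icc_self hs
    have := intervalIntegral.integral_mono_on_of_le_Ioo (μ := volume) (hH.pos s hs').le
      ((S.cw_slice s).intervalIntegrable _ _) (intervalIntegrable_const (c := (0:ℝ)))
      (fun q hq => S.w_nonpos_right D hH hH0 hs' hq.1 hq.2)
    simpa [logVel] using this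
  calc Real.exp (H t) ≤ Real.exp (Real.log 2) := Real.exp_le_exp.2 this
    _ = 2 := Real.exp_log two_pos

/-- The acceleration of a particle `A` is controlled from below by the position of any particle
`B` lying between `A` and the one starting at `x = 1/2`, weighted with the density difference of
`B` and `A`. -/
lemma IsLogSol.le_accel (S : IsLogSol w r wt wp rt rp C) (D : IsBlowupData (w 0) (r 0))
    {A B : ℝ → ℝ} (hA : IsTraj w A) (hB : IsTraj w B) (hB0 : Real.log 2 ≤ B 0)
    (hBA : B 0 ≤ A 0) {t : ℝ} (ht : t ∈ Icc (0:ℝ) 2) :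
    (r 0 (B 0) - r 0 (A 0)) * Real.exp (B t) - 4 ≤
      (∫ q in (0:ℝ)..A t, (w t q ^ 2 + Real.exp q * r t q))
        - Real.exp (A t) * r t (A t) + r t 0 := by
  have h0 : (0:ℝ) ∈ Icc (0:ℝ) 2 := by simp
  obtain ⟨H, hH, hH0⟩ := S.exists_traj h0 (Real.log_pos one_lt_two)
  have hHB : H t ≤ B t := S.traj_le hH hB h0 ht (by rw [hH0]; exact hB0)
  have hBAt : B t ≤ A t := S.traj_le hB hA h0 ht hBA
  have hHt := hH.pos t ht
  have cw := S.cw_slice t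
  have cr := S.cr_slice t
  have hcont : Continuous fun q => w t q ^ 2 + Real.exp q * r t q := by fun_prop
  have hint : ∀ a b, IntervalIntegrable (fun q => w t q ^ 2 + Real.exp q * r t q) volume a b :=
    fun a b => hcont.intervalIntegrable a b
  have i1 : 0 ≤ ∫ q in (0:ℝ)..H t, (w t q ^ 2 + Real.exp q * r t q) :=
    intervalIntegral.integral_nonneg hHt.le fun q hq =>
      add_nonneg (sq_nonneg _) (mul_nonneg (Real.exp_pos q).le (S.r_nonneg D ht hq.1))
  -- between two particles starting in `x ≤ 1/2` the density is at least that of the left one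
  have arc : ∀ {P Q : ℝ → ℝ}, IsTraj w P → IsTraj w Q → Real.log 2 ≤ P 0 → P t ≤ Q t →
      r 0 (Q 0) * (Real.exp (Q t) - Real.exp (P t)) ≤
        ∫ q in P t..Q t, (w t q ^ 2 + Real.exp q * r t q) := by
    intro P Q hP hQ hP0 hPQ
    have : r 0 (Q 0) * (Real.exp (Q t) - Real.exp (P t))
        = ∫ q in P t..Q t, r 0 (Q 0) * Real.exp q := by
      rw [intervalIntegral.integral_const_mul, integral_exp]
    rw [this]
    refine intervalIntegral.integral_mono_on hPQ
      (Continuous.intervalIntegrable (by fun_prop) _ _) (hint _ _) fun q hq => ?_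
    obtain ⟨R, hR, rfl⟩ := S.exists_traj ht ((hP.pos t ht).trans_le hq.1)
    have h1 : P 0 ≤ R 0 := S.traj_le hP hR ht h0 hq.1
    have h2 : R 0 ≤ Q 0 := S.traj_le hR hQ ht h0 hq.2
    have h3 : r 0 (Q 0) ≤ r 0 (R 0) := D.anti (hP0.trans h1) (hP0.trans (h1.trans h2)) h2
    rw [S.r_along hR ht]
    nlinarith [Real.exp_pos (R t), sq_nonneg (w t (R t))]
  have i2 := arc hH hB hH0.ge hHB
  have i3 := arc hB hA hB0 hBAt
  have e1 := intervalIntegral.integral_add_adjacent_intervals (hint 0 (H t)) (hint (H t) (B t))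
  have e2 := intervalIntegral.integral_add_adjacent_intervals (hint 0 (B t)) (hint (B t) (A t))
  rw [S.r_along hA ht]
  have b1 := S.exp_H_le D hH hH0 ht
  have b2 := D.le_two (B 0)
  have b3 := D.nonneg (B 0)
  have b4 := S.r_nonneg D ht le_rfl
  nlinarith [Real.exp_pos (H t)]

/-- Particles starting at `x ≤ 2/5` are fast: their initial velocity is at least
`9000 * log (9 / 8) ≥ 1000`, and the acceleration is never below `-4`. -/
lemma IsLogSol.vel_ge (S : IsLogSol w r wt wp rt rp C) (D : IsBlowupData (w 0) (r 0))
    {A : ℝ → ℝ} (hA : IsTraj w A) (hA0 : Real.log (5 / 2) ≤ A 0) {t : ℝ}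
    (ht : t ∈ Icc (0:ℝ) 2) : 992 ≤ logVel w t (A t) := by
  have l1 : Real.log (20 / 9) ≤ Real.log (5 / 2) := Real.log_le_log (by norm_num) (by norm_num)
  have l2 : Real.log 2 ≤ Real.log (5 / 2) := Real.log_le_log (by norm_num) (by norm_num)
  have l3 : 1 / 9 ≤ Real.log (5 / 2) - Real.log (20 / 9) := by
    rw [← Real.log_div (by norm_num) (by norm_num)]
    have := Real.one_sub_inv_le_log_of_pos (x := 5 / 2 / (20 / 9)) (by norm_num)
    norm_num at this ⊢
    linarith
  have l4 : 0 ≤ Real.log (20 / 9) := Real.log_nonneg (by norm_num)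
  have cw := S.cw_slice 0
  have hv0 : 1000 ≤ logVel w 0 (A 0) := by
    have hint : ∀ a b, IntervalIntegrable (w 0) volume a b := fun a b => cw.intervalIntegrable a b
    have e1 := intervalIntegral.integral_add_adjacent_intervals
      (hint 0 (Real.log (20 / 9))) (hint (Real.log (20 / 9)) (Real.log (5 / 2)))
    have e2 := intervalIntegral.integral_add_adjacent_intervals
      (hint 0 (Real.log (5 / 2))) (hint (Real.log (5 / 2)) (A 0))
    have i1 := intervalIntegral.integral_nonneg (μ := volume) l4 fun q _ => D.w_nonneg q
    have i3 := intervalIntegral.integral_nonneg (μ := volume) hA0 fun q _ => D.w_nonneg q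
    have i2 : ∫ q in Real.log (20 / 9)..Real.log (5 / 2), w 0 q
        = ∫ q in Real.log (20 / 9)..Real.log (5 / 2), (9000:ℝ) :=
      intervalIntegral.integral_congr fun q hq => D.w_large q (by rwa [uIcc_of_le l1] at hq)
    rw [intervalIntegral.integral_const, smul_eq_mul] at i2
    unfold logVel
    linarith
  have := image_le_of_deriv_le (f := fun s => 1000 - 4 * s) (f' := fun _ => -4) (by fun_prop)
    (IsTraj.cont_vel S hA)
    (fun s _ => (((hasDerivAt_id s).const_mul 4).const_sub 1000).congr_deriv (by norm_num))
    (fun s hs => S.accel hA hs)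
    (fun s hs => by
      have := S.le_accel D hA hA (l2.trans hA0) le_rfl (Ioo_subset_Icc_self hs)
      linarith) (by simpa using hv0) ht
  linarith [ht.2]

/-- The chain of particles: every particle starting in `x ≤ 2/5` with density at most `1 + 2^{-n}`
is beyond `p = 10(n+1)` from time `2 - 2^{-n}` on. In the induction step, the particle with density
exactly `1 + 2^{-n}` being that far makes the acceleration of those with density at most
`1 + 2^{-n-1}` so large that they cover the required distance within time `2^{-n-1}`. -/
lemma IsLogSol.chain (S : IsLogSol w r wt wp rt rp C) (D : IsBlowupData (w 0) (r 0)) (n : ℕ) :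
    ∀ A, IsTraj w A → Real.log (5 / 2) ≤ A 0 → r 0 (A 0) ≤ 1 + (1 / 2) ^ n →
      ∀ t ∈ Icc (2 - (1 / 2) ^ n : ℝ) 2, 10 * ((n:ℝ) + 1) ≤ A t := by
  have h0 : (0:ℝ) ∈ Icc (0:ℝ) 2 := by simp
  have l2 : Real.log 2 ≤ Real.log (5 / 2) := Real.log_le_log (by norm_num) (by norm_num)
  induction n with
  | zero =>
    intro A hA hA0 _ t ht
    have ht' : t ∈ Icc (0:ℝ) 2 := ⟨by norm_num at ht; linarith [ht.1], ht.2⟩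
    have := image_le_of_deriv_le (f := fun s => 992 * s) (f' := fun _ => 992) (by fun_prop)
      hA.cont (fun s _ => ((hasDerivAt_id s).const_mul 992).congr_deriv (by norm_num)) hA.der
      (fun s hs => S.vel_ge D hA hA0 (Ioo_subset_Icc_self hs))
      (by simpa using (hA.pos 0 h0).le) ht'
    norm_num at ht this ⊢
    linarith [ht.1]
  | succ n ih =>
    intro A hA hA0 hrA t ht
    set h : ℝ := (1 / 2) ^ (n + 1) with hh
    have hpos : 0 < h := by positivity
    have hn : ((1:ℝ) / 2) ^ n = 2 * h := by rw [hh, pow_succ]; ring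
    have hle : h ≤ 1 / 2 := by
      have : ((1:ℝ) / 2) ^ n ≤ 1 := pow_le_one₀ (by norm_num) (by norm_num)
      linarith
    obtain ⟨β, hβ, hrβ⟩ : ∃ β ∈ Icc (Real.log (5 / 2)) (A 0), r 0 β = 1 + 2 * h := by
      refine intermediate_value_Icc' hA0 (S.cr_slice 0).continuousOn ⟨?_, ?_⟩
      · linarith
      · rw [D.eq_two]; linarith
    obtain ⟨B, hB, rfl⟩ := S.exists_traj h0 ((Real.log_pos (by norm_num)).trans_le hβ.1)
    have hBt := ih B hB hβ.1 (by rw [hn]; exact hrβ.le)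
    rw [hn] at hBt
    set T : ℝ := 2 - 2 * h with hT
    have hT0 : 0 ≤ T := by linarith
    have hsub : Icc T 2 ⊆ Icc (0:ℝ) 2 := Icc_subset_Icc_left hT0
    have hsub' : Ioo T 2 ⊆ Ioo (0:ℝ) 2 := Ioo_subset_Ioo_left hT0
    set E : ℝ := Real.exp (10 * ((n:ℝ) + 1)) with hE
    set a : ℝ := h * E - 4 with ha
    have hvel : ∀ s ∈ Icc T 2, a * (s - T) ≤ logVel w s (A s) := by
      intro s hs
      refine image_le_of_deriv_le (f := fun s => a * (s - T)) (f' := fun _ => a) (by fun_prop)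
        ((IsTraj.cont_vel S hA).mono hsub)
        (fun s _ => (((hasDerivAt_id s).sub_const T).const_mul a).congr_deriv (by simp))
        (fun s hs => S.accel hA (hsub' hs)) (fun s hs => ?_) ?_ hs
      · have h1 := S.le_accel D hA hB (l2.trans hβ.1) hβ.2 (hsub (Ioo_subset_Icc_self hs))
        have h2 : E ≤ Real.exp (B s) := Real.exp_le_exp.2 (hBt s (Ioo_subset_Icc_self hs))
        have h3 : h * E ≤ (r 0 (B 0) - r 0 (A 0)) * Real.exp (B s) :=
          mul_le_mul (by linarith) h2 (Real.exp_pos _).le (by linarith)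
        linarith
      · have := S.vel_ge D hA hA0 (hsub (left_mem_Icc.2 (by linarith)))
        simp only [sub_self, mul_zero]
        linarith
    have ht' : t ∈ Icc T 2 := ⟨by linarith [ht.1], ht.2⟩
    have hpos2 := image_le_of_deriv_le (f := fun s => a * (s - T) ^ 2 / 2)
      (f' := fun s => a * (s - T)) (by fun_prop) (hA.cont.mono hsub)
      (fun s _ => (((((hasDerivAt_id s).sub_const T).pow 2).const_mul a).div_const 2).congr_deriv
        (by simp; ring)) (fun s hs => hA.der s (hsub' hs))
      (fun s hs => hvel s (Ioo_subset_Icc_self hs))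
      (by simpa using (hA.pos T ⟨hT0, by linarith⟩).le) ht'
    -- `e^{10(n+1)} ≥ 2^{14(n+1)}`, which beats the factors `h = 2^{-n-1}` and `(t - T)^2 ≥ h^2`
    have hK : h * 2 ^ (n + 1) = 1 := by rw [hh, ← mul_pow]; norm_num
    set K : ℝ := 2 ^ (n + 1) with hKdef
    have hKn : (n:ℝ) + 2 ≤ K := by
      have : n + 2 ≤ 2 ^ (n + 1) := Nat.lt_two_pow_self
      rw [hKdef]; exact_mod_cast this
    have hK2 : 2 ≤ K := by linarith [(Nat.cast_nonneg n : (0:ℝ) ≤ n)]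
    have hEK : K ^ 14 ≤ E := by
      have : (2:ℝ) ^ 14 ≤ Real.exp 10 := by
        have h1 := Real.exp_one_gt_d9
        calc (2:ℝ) ^ 14 ≤ (2.7182818283 : ℝ) ^ 10 := by norm_num
          _ ≤ Real.exp 1 ^ 10 := by gcongr
          _ = Real.exp 10 := by rw [← Real.exp_nat_mul]; norm_num
      calc K ^ 14 = ((2:ℝ) ^ 14) ^ (n + 1) := by rw [hKdef, ← pow_mul, ← pow_mul, mul_comm]
        _ ≤ Real.exp 10 ^ (n + 1) := by gcongr
        _ = E := by rw [← Real.exp_nat_mul, hE]; push_cast; ring_nf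
    have hts : h ^ 2 ≤ (t - T) ^ 2 := by
      have : h ≤ t - T := by linarith [ht.1]
      gcongr
    have haK : K ^ 13 - 4 ≤ a := by
      have : h * K ^ 14 ≤ h * E := mul_le_mul_of_nonneg_left hEK hpos.le
      have e : h * K ^ 14 = K ^ 13 := by linear_combination K ^ 13 * hK
      linarith
    have hK13 : (2:ℝ) ^ 13 ≤ K ^ 13 := by gcongr
    have h1 : (K ^ 13 - 4) * h ^ 2 ≤ a * (t - T) ^ 2 :=
      mul_le_mul haK hts (sq_nonneg _) (by norm_num at hK13; linarith)
    have h2 : (K ^ 13 - 4) * h ^ 2 = K ^ 11 - 4 * h ^ 2 := by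
      linear_combination (K ^ 12 * h + K ^ 11) * hK
    have hK11 : 2 ^ 10 * K ≤ K ^ 11 := by
      calc 2 ^ 10 * K ≤ K ^ 10 * K := by gcongr
        _ = K ^ 11 := by ring
    push_cast
    nlinarith

/-- The chain of particles forces the one starting at `x = 1/3` to reach `p = ∞`, i.e. `x = 0`, by
time `2`, so the solution cannot exist on `[0,2]`. -/
lemma IsLogSol.contradiction (S : IsLogSol w r wt wp rt rp C) (D : IsBlowupData (w 0) (r 0)) :
    False := by
  have h0 : (0:ℝ) ∈ Icc (0:ℝ) 2 := by simp
  obtain ⟨A, hA, hA0⟩ := S.exists_traj h0 (Real.log_pos (show (1:ℝ) < 3 by norm_num))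
  obtain ⟨n, hn⟩ := exists_nat_gt (A 2)
  have := S.chain D n A hA (by rw [hA0]; exact Real.log_le_log (by norm_num) (by norm_num))
    (by rw [hA0, D.eq_one]; linarith [show (0:ℝ) ≤ (1 / 2) ^ n by positivity]) 2
    ⟨by linarith [show (0:ℝ) ≤ (1 / 2) ^ n by positivity], le_rfl⟩
  linarith [(Nat.cast_nonneg n : (0:ℝ) ≤ n)]

end Blowup

/-! ### Passing to the coordinate `p = -log x` -/

/-- The clamping `(t,p) ↦ (t, e^{-p})` of the plane to `[0,2] × (0,1]`. -/
noncomputable def logPt (t p : ℝ) : ℝ × ℝ := (max 0 (min t 2), Real.exp (-max p 0))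

/-- A function of `(t,x)` written in the coordinate `p = -log x`, with clamped arguments. -/
noncomputable def logLift (f : ℝ → ℝ → ℝ) (t p : ℝ) : ℝ := f (logPt t p).1 (logPt t p).2

lemma logPt_cont : Continuous fun z : ℝ × ℝ => logPt z.1 z.2 := by
  unfold logPt; fun_prop

lemma logPt_mem (t p : ℝ) : logPt t p ∈ Icc (0:ℝ) 2 ×ˢ Icc (0:ℝ) 1 := by
  refine ⟨⟨le_max_left _ _, max_le zero_le_two (min_le_right _ _)⟩, (Real.exp_pos _).le, ?_⟩
  simp only [logPt, Real.exp_le_one_iff]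
  linarith [le_max_right p 0]

lemma logPt_of_mem {t p : ℝ} (ht : t ∈ Icc (0:ℝ) 2) (hp : 0 ≤ p) :
    logPt t p = (t, Real.exp (-p)) := by
  simp [logPt, ht.1, ht.2, hp]

lemma logPt_mem' (t p : ℝ) : logPt t p ∈ Ici (0:ℝ) ×ˢ Icc (0:ℝ) 1 :=
  prod_mono Icc_subset_Ici_self subset_rfl (logPt_mem t p)

/-- The derivatives of a `C¹` function in the coordinate `p = -log x`. -/
lemma exists_logLift_deriv {f : ℝ → ℝ → ℝ}
    (hf : ContDiffOn ℝ 1 (fun z : ℝ × ℝ => f z.1 z.2) (Ici (0:ℝ) ×ˢ Icc (0:ℝ) 1)) :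
    ∃ ft fp : ℝ → ℝ → ℝ, (Continuous fun z : ℝ × ℝ => ft z.1 z.2) ∧
      ∀ t ∈ Ioo (0:ℝ) 2, ∀ p, 0 < p →
        HasFDerivAt (fun z : ℝ × ℝ => logLift f z.1 z.2)
          (ft t p • ContinuousLinearMap.fst ℝ ℝ ℝ + fp t p • ContinuousLinearMap.snd ℝ ℝ ℝ) (t, p) ∧
        deriv (fun s => f s (Real.exp (-p))) t = ft t p ∧
        Real.exp (-p) * deriv (fun y => f t y) (Real.exp (-p)) = -fp t p := by
  set K : Set (ℝ × ℝ) := Ici (0:ℝ) ×ˢ Icc (0:ℝ) 1 with hK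
  set G := fderivWithin ℝ (fun z : ℝ × ℝ => f z.1 z.2) K with hG
  have hu : UniqueDiffOn ℝ K := (uniqueDiffOn_Ici 0).prod (uniqueDiffOn_Icc zero_lt_one)
  have hGc : Continuous fun z : ℝ × ℝ => G (logPt z.1 z.2) :=
    (hf.continuousOn_fderivWithin hu le_rfl).comp_continuous logPt_cont fun z => logPt_mem' _ _
  refine ⟨fun t p => G (logPt t p) (1, 0), fun t p => -(Real.exp (-p) * G (logPt t p) (0, 1)),
    hGc.clm_apply continuous_const, fun t ht p hp => ?_⟩
  have hpt := logPt_of_mem (Ioo_subset_Icc_self ht) hp.le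
  have hx1 : Real.exp (-p) < 1 := by rw [Real.exp_lt_one_iff]; linarith
  have hKn : K ∈ nhds (t, Real.exp (-p)) :=
    prod_mem_nhds (Ici_mem_nhds ht.1) (Icc_mem_nhds (Real.exp_pos _) hx1)
  have hfd : HasFDerivAt (fun z : ℝ × ℝ => f z.1 z.2) (G (t, Real.exp (-p)))
      (t, Real.exp (-p)) :=
    ((hf.differentiableOn one_ne_zero _ (mem_of_mem_nhds hKn)).hasFDerivWithinAt).hasFDerivAt hKn
  simp only [hpt]
  refine ⟨?_, ?_, ?_⟩
  · have hexp : HasFDerivAt (fun z : ℝ × ℝ => Real.exp (-z.2))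
        (-(Real.exp (-p)) • ContinuousLinearMap.snd ℝ ℝ ℝ) (t, p) :=
      ((hasFDerivAt_snd (p := (t, p))).neg.exp).congr_fderiv (by ext <;> simp)
    have hcomp := HasFDerivAt.comp (t, p) (f := fun z : ℝ × ℝ => (z.1, Real.exp (-z.2))) hfd
      (hasFDerivAt_fst.prodMk hexp)
    refine (hcomp.congr_fderiv ?_).congr_of_eventuallyEq ?_
    · have h2 : ∀ c : ℝ, G (t, Real.exp (-p)) (0, c) = c * G (t, Real.exp (-p)) (0, 1) := fun c => by
        rw [← smul_eq_mul, ← map_smul]; simp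
      ext
      · simp
      · have := h2 (-Real.exp (-p))
        simpa using this
    · have hn : Ioo (0:ℝ) 2 ×ˢ Ioi (0:ℝ) ∈ nhds (t, p) :=
        prod_mem_nhds (Ioo_mem_nhds ht.1 ht.2) (Ioi_mem_nhds hp)
      filter_upwards [hn] with z hz
      simp [logLift, logPt_of_mem (Ioo_subset_Icc_self hz.1) (le_of_lt hz.2)]
  · exact (HasFDerivAt.comp_hasDerivAt (f := fun s => (s, Real.exp (-p))) t hfd
      ((hasDerivAt_id t).prodMk (hasDerivAt_const t _))).deriv
  · rw [neg_neg]
    congr 1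
    exact (HasFDerivAt.comp_hasDerivAt (f := fun y => (t, y)) (Real.exp (-p)) hfd
      ((hasDerivAt_const _ t).prodMk (hasDerivAt_id _))).deriv

lemma logVel_logLift {ω : ℝ → ℝ → ℝ}
    (hω : ContDiffOn ℝ 1 (fun z : ℝ × ℝ => ω z.1 z.2) (Ici (0:ℝ) ×ˢ Icc (0:ℝ) 1)) {t p : ℝ}
    (ht : t ∈ Icc (0:ℝ) 2) (hp : 0 ≤ p) :
    logVel (logLift ω) t p = OmegaF ω t (Real.exp (-p)) := by
  have hsub := intervalIntegral.integral_comp_mul_deriv'' (a := 0) (b := p)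
    (f := fun q => Real.exp (-q)) (f' := fun q => -Real.exp (-q)) (g := fun y => ω t y / y)
    (by fun_prop) (fun q _ => by
      exact ((hasDerivAt_neg q).exp.congr_deriv (by simp)).hasDerivWithinAt) (by fun_prop) (by
      rintro _ ⟨q, hq, rfl⟩
      rw [uIcc_of_le hp] at hq
      have hmaps : MapsTo (fun y : ℝ => (t, y)) ((fun q => Real.exp (-q)) '' uIcc 0 p)
          (Ici (0:ℝ) ×ˢ Icc (0:ℝ) 1) := by
        rintro _ ⟨q, hq, rfl⟩
        rw [uIcc_of_le hp] at hq
        exact ⟨ht.1, (Real.exp_pos _).le, by rw [Real.exp_le_one_iff]; linarith [hq.1]⟩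
      have hc := hω.continuousOn.comp (by fun_prop) hmaps
      exact (hc _ ⟨q, by rwa [uIcc_of_le hp], rfl⟩).div continuousWithinAt_id (Real.exp_pos _).ne')
  simp only [neg_zero, Real.exp_zero] at hsub
  rw [OmegaF, intervalIntegral.integral_symm, ← hsub, ← intervalIntegral.integral_neg, logVel]
  refine intervalIntegral.integral_congr fun q hq => ?_
  rw [uIcc_of_le hp] at hq
  simp only [logLift, logPt_of_mem ht hq.1, Function.comp]
  field_simp

/-- A global classical solution gives a solution in the coordinate `p = -log x`. -/
lemma IsClassicalSolution.exists_isLogSol {ω ρ : ℝ → ℝ → ℝ}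
    (h : IsClassicalSolution ω ρ (Ici 0)) :
    ∃ wt wp rt rp C, IsLogSol (logLift ω) (logLift ρ) wt wp rt rp C := by
  obtain ⟨hω, hρ, heq⟩ := h
  obtain ⟨wt, wp, hwt, hw⟩ := exists_logLift_deriv hω
  obtain ⟨rt, rp, -, hr⟩ := exists_logLift_deriv hρ
  obtain ⟨C, hC⟩ := ((isCompact_Icc (a := (0:ℝ)) (b := 2)).prod
    (isCompact_Icc (a := (0:ℝ)) (b := 1))).exists_bound_of_continuousOn
    (hω.continuousOn.mono (prod_mono Icc_subset_Ici_self subset_rfl))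
  refine ⟨wt, wp, rt, rp, C, ⟨?_, ?_, hwt, fun t p => hC _ (logPt_mem t p),
    fun t ht p hp => (hw t ht p hp).1, fun t ht p hp => (hr t ht p hp).1,
    fun t ht p hp => ?_, fun t ht p hp => ?_⟩⟩
  · exact hω.continuousOn.comp_continuous logPt_cont fun z => logPt_mem' _ _
  · exact hρ.continuousOn.comp_continuous logPt_cont fun z => logPt_mem' _ _
  all_goals
    have hx : Real.exp (-p) ∈ Icc (0:ℝ) 1 :=
      ⟨(Real.exp_pos _).le, by rw [Real.exp_le_one_iff]; linarith⟩
    obtain ⟨e1, e2⟩ := heq t ht.1.le _ hx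
    obtain ⟨-, a1, a2⟩ := hw t ht p hp
    obtain ⟨-, b1, b2⟩ := hr t ht p hp
    rw [logVel_logLift hω (Ioo_subset_Icc_self ht) hp.le]
    simp only [uF] at e1 e2
  · rw [b1] at e1
    linear_combination e1 + OmegaF ω t (Real.exp (-p)) * b2
  · have hE : Real.exp p * Real.exp (-p) = 1 := by rw [← Real.exp_add]; simp
    rw [a1] at e2
    linear_combination e2 + OmegaF ω t (Real.exp (-p)) * a2 + Real.exp p * b2
      - hE * deriv (fun y => ρ t y) (Real.exp (-p))

/-! ### The initial data -/

/-- The initial density: a smooth step to `1` on `[1/4,1/3]`, a second one to `2` on `[1/3,2/5]`, and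
a smooth descent to `0` on `[1/2,3/4]`. -/
noncomputable def rhoInit (x : ℝ) : ℝ :=
  (Real.smoothTransition (12 * (x - 1 / 4)) + Real.smoothTransition (15 * (x - 1 / 3)))
    * Real.smoothTransition (4 * (3 / 4 - x))

/-- The initial vorticity: a smooth plateau of height `9000` on `[3/10,9/20]`. -/
noncomputable def omegaInit (x : ℝ) : ℝ :=
  9000 * (Real.smoothTransition (20 * (x - 1 / 4)) * Real.smoothTransition (20 * (1 / 2 - x)))

section InitialData

open Real.smoothTransition

lemma rhoInit_contDiff : ContDiff ℝ (⊤ : ℕ∞) rhoInit := by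
  unfold rhoInit
  exact ((Real.smoothTransition.contDiff.comp (by fun_prop)).add
    (Real.smoothTransition.contDiff.comp (by fun_prop))).mul
    (Real.smoothTransition.contDiff.comp (by fun_prop))

lemma omegaInit_contDiff : ContDiff ℝ (⊤ : ℕ∞) omegaInit := by
  unfold omegaInit
  exact contDiff_const.mul ((Real.smoothTransition.contDiff.comp (by fun_prop)).mul
    (Real.smoothTransition.contDiff.comp (by fun_prop)))

lemma rhoInit_nonneg (x : ℝ) : 0 ≤ rhoInit x :=
  mul_nonneg (add_nonneg (nonneg _) (nonneg _)) (nonneg _)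

lemma omegaInit_nonneg (x : ℝ) : 0 ≤ omegaInit x :=
  mul_nonneg (by norm_num) (mul_nonneg (nonneg _) (nonneg _))

lemma rhoInit_le_two (x : ℝ) : rhoInit x ≤ 2 := by
  have h1 := le_one (12 * (x - 1 / 4))
  have h2 := le_one (15 * (x - 1 / 3))
  have h3 := le_one (4 * (3 / 4 - x))
  have h4 := nonneg (12 * (x - 1 / 4))
  have h5 := nonneg (15 * (x - 1 / 3))
  unfold rhoInit
  nlinarith

lemma rhoInit_eq_zero {x : ℝ} (hx : x ∉ Icc (1 / 4 : ℝ) (3 / 4)) : rhoInit x = 0 := by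
  unfold rhoInit
  by_cases h : x < 1 / 4
  · rw [zero_of_nonpos (by linarith : 12 * (x - 1 / 4) ≤ 0),
      zero_of_nonpos (by linarith : 15 * (x - 1 / 3) ≤ 0), add_zero, zero_mul]
  · have : 3 / 4 < x := by
      by_contra h'
      exact hx ⟨not_lt.1 h, not_lt.1 h'⟩
    rw [zero_of_nonpos (by linarith : 4 * (3 / 4 - x) ≤ 0), mul_zero]

lemma omegaInit_eq_zero_right {x : ℝ} (hx : 1 / 2 ≤ x) : omegaInit x = 0 := by
  unfold omegaInit
  rw [zero_of_nonpos (by linarith : 20 * (1 / 2 - x) ≤ 0), mul_zero, mul_zero]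

lemma omegaInit_eq_zero {x : ℝ} (hx : x ∉ Icc (1 / 4 : ℝ) (1 / 2)) : omegaInit x = 0 := by
  by_cases h : x < 1 / 4
  · unfold omegaInit
    rw [zero_of_nonpos (by linarith : 20 * (x - 1 / 4) ≤ 0), zero_mul, mul_zero]
  · refine omegaInit_eq_zero_right ?_
    by_contra h'
    exact hx ⟨not_lt.1 h, (not_le.1 h').le⟩

lemma tsupport_subset_Icc {f : ℝ → ℝ} {a b : ℝ} (h : ∀ x, x ∉ Icc a b → f x = 0) :
    tsupport f ⊆ Icc a b :=
  closure_minimal (fun x hx => by_contra fun hn => hx (h x hn)) isClosed_Icc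

lemma rhoInit_mono {x y : ℝ} (hxy : x ≤ y) (hy : y ≤ 1 / 2) : rhoInit x ≤ rhoInit y := by
  unfold rhoInit
  rw [one_of_one_le (by linarith : 1 ≤ 4 * (3 / 4 - x)),
    one_of_one_le (by linarith : 1 ≤ 4 * (3 / 4 - y)), mul_one, mul_one]
  exact add_le_add (Real.smoothTransition.monotone (by linarith))
    (Real.smoothTransition.monotone (by linarith))

lemma rhoInit_anti {x y : ℝ} (hx : 1 / 2 ≤ x) (hxy : x ≤ y) : rhoInit y ≤ rhoInit x := by
  unfold rhoInit
  rw [one_of_one_le (by linarith : 1 ≤ 12 * (x - 1 / 4)),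
    one_of_one_le (by linarith : 1 ≤ 12 * (y - 1 / 4)),
    one_of_one_le (by linarith : 1 ≤ 15 * (x - 1 / 3)),
    one_of_one_le (by linarith : 1 ≤ 15 * (y - 1 / 3))]
  exact mul_le_mul_of_nonneg_left (Real.smoothTransition.monotone (by linarith)) (by norm_num)

lemma rhoInit_eq_two {x : ℝ} (h1 : 2 / 5 ≤ x) (h2 : x ≤ 1 / 2) : rhoInit x = 2 := by
  unfold rhoInit
  rw [one_of_one_le (by linarith : 1 ≤ 12 * (x - 1 / 4)),
    one_of_one_le (by linarith : 1 ≤ 15 * (x - 1 / 3)),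
    one_of_one_le (by linarith : 1 ≤ 4 * (3 / 4 - x))]
  norm_num

lemma rhoInit_third : rhoInit (1 / 3) = 1 := by
  unfold rhoInit
  rw [one_of_one_le (by norm_num : (1:ℝ) ≤ 12 * (1 / 3 - 1 / 4)),
    zero_of_nonpos (by norm_num : (15:ℝ) * (1 / 3 - 1 / 3) ≤ 0),
    one_of_one_le (by norm_num : (1:ℝ) ≤ 4 * (3 / 4 - 1 / 3))]
  norm_num

lemma omegaInit_plateau {x : ℝ} (h1 : 3 / 10 ≤ x) (h2 : x ≤ 9 / 20) : omegaInit x = 9000 := by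
  unfold omegaInit
  rw [one_of_one_le (by linarith : 1 ≤ 20 * (x - 1 / 4)),
    one_of_one_le (by linarith : 1 ≤ 20 * (1 / 2 - x))]
  norm_num

/-- The inverse change of coordinates on the level of inequalities. -/
lemma inv_le_exp_neg {p c : ℝ} (hc : 0 < c) (h : p ≤ Real.log c) : c⁻¹ ≤ Real.exp (-p) := by
  rw [Real.exp_neg]
  exact inv_anti₀ (Real.exp_pos p) ((Real.le_log_iff_exp_le hc).1 h)

lemma exp_neg_le_inv {p c : ℝ} (hc : 0 < c) (h : Real.log c ≤ p) : Real.exp (-p) ≤ c⁻¹ := by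
  rw [Real.exp_neg]
  exact inv_anti₀ hc ((Real.log_le_iff_le_exp hc).1 h)

lemma isBlowupData_init : IsBlowupData (fun p => omegaInit (Real.exp (-max p 0)))
    (fun p => rhoInit (Real.exp (-max p 0))) := by
  have hlog : ∀ {c p : ℝ}, 1 ≤ c → Real.log c ≤ p → max p 0 = p := fun hc h =>
    max_eq_left ((Real.log_nonneg hc).trans h)
  have hexp : ∀ {c : ℝ}, 1 ≤ c → Real.exp (-max (Real.log c) 0) = c⁻¹ := fun hc => by
    rw [hlog hc le_rfl, Real.exp_neg, Real.exp_log (by linarith)]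
  refine ⟨fun p hp q hq hpq => ?_, fun p hp q hq hpq => ?_, fun p => rhoInit_nonneg _,
    fun p => rhoInit_le_two _, ?_, ?_, fun p hp => ?_, fun p => omegaInit_nonneg _,
    fun p hp => ?_⟩
  · refine rhoInit_anti ?_ (by gcongr)
    have := inv_le_exp_neg two_pos hq.2
    rw [max_eq_left hq.1]
    linarith
  · refine rhoInit_mono (by gcongr) ?_
    have := exp_neg_le_inv two_pos hp
    simp only [hlog one_le_two hp]
    linarith
  · rw [hexp (by norm_num)]
    exact rhoInit_eq_two (by norm_num) (by norm_num)
  · rw [hexp (by norm_num), ← one_div]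
    exact rhoInit_third
  · refine omegaInit_eq_zero_right ?_
    have := inv_le_exp_neg two_pos hp.2
    rw [max_eq_left hp.1]
    linarith
  · have h1 := inv_le_exp_neg (by norm_num) hp.2
    have h2 := exp_neg_le_inv (by norm_num) hp.1
    simp only [hlog (by norm_num) hp.1]
    exact omegaInit_plateau (by norm_num at h1 ⊢; linarith) (by norm_num at h2 ⊢; linarith)

end InitialData

/-! ### Conclusion -/

/-- **No global classical solution.** There exist smooth `ρ₀, ω₀` supported in
`[1/4,3/4]`, with the concrete shape described in the paper (in particular
`ω₀ ≡ M` on `[0.3,0.45]` for a large constant `M`, e.g. `M = 200`), such that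
there is no global classical solution of the 1D model Boussinesq system on
`[0,∞)` with initial data `(ω₀,ρ₀)`. -/
theorem no_global_classical_solution :
    ∃ (ρ₀ ω₀ : ℝ → ℝ),
      ContDiff ℝ (⊤ : ℕ∞) ρ₀ ∧ ContDiff ℝ (⊤ : ℕ∞) ω₀ ∧
      tsupport ρ₀ ⊆ Icc (1/4 : ℝ) (3/4) ∧ tsupport ω₀ ⊆ Icc (1/4 : ℝ) (3/4) ∧
      (∀ x, 0 ≤ ρ₀ x) ∧
      MonotoneOn ρ₀ (Icc (1/4 : ℝ) (1/2)) ∧ AntitoneOn ρ₀ (Icc (1/2 : ℝ) (3/4)) ∧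
      ρ₀ (1/2) = 2 ∧ ρ₀ (1/3) = 1 ∧
      (∀ x, 0 ≤ ω₀ x) ∧ tsupport ω₀ ⊆ Icc (1/4 : ℝ) (1/2) ∧
      (∃ M : ℝ, 200 ≤ M ∧ ∀ x ∈ Icc (0.3 : ℝ) 0.45, ω₀ x = M) ∧
      ¬ ∃ (ω ρ : ℝ → ℝ → ℝ),
          IsClassicalSolution ω ρ (Ici 0) ∧
          ∀ x ∈ Icc (0:ℝ) 1, ω 0 x = ω₀ x ∧ ρ 0 x = ρ₀ x := by
  refine ⟨rhoInit, omegaInit, rhoInit_contDiff, omegaInit_contDiff,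
    tsupport_subset_Icc fun x => rhoInit_eq_zero,
    (tsupport_subset_Icc fun x => omegaInit_eq_zero).trans (Icc_subset_Icc_right (by norm_num)),
    rhoInit_nonneg, fun x _ y hy hxy => rhoInit_mono hxy hy.2,
    fun x hx y _ hxy => rhoInit_anti hx.1 hxy, rhoInit_eq_two (by norm_num) le_rfl, rhoInit_third,
    omegaInit_nonneg, tsupport_subset_Icc fun x => omegaInit_eq_zero,
    ⟨9000, by norm_num, fun x hx => omegaInit_plateau (by norm_num at hx ⊢; exact hx.1)
      (by norm_num at hx ⊢; exact hx.2)⟩, ?_⟩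
  rintro ⟨ω, ρ, hsol, hinit⟩
  obtain ⟨wt, wp, rt, rp, C, S⟩ := hsol.exists_isLogSol
  refine S.contradiction ?_
  have h : ∀ p : ℝ, logPt 0 p = (0, Real.exp (-max p 0)) := fun p => by simp [logPt]
  have hw : logLift ω 0 = fun p => omegaInit (Real.exp (-max p 0)) := funext fun p => by
    have := (hinit _ (logPt_mem 0 p).2).1
    simpa [logLift, h] using this
  have hr : logLift ρ 0 = fun p => rhoInit (Real.exp (-max p 0)) := funext fun p => by
    have := (hinit _ (logPt_mem 0 p).2).2
    simpa [logLift, h] using this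
  rw [hw, hr]
  exact isBlowupData_init
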